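/- Let K be an algebraically closed field, r ≥ 1 an integer, and n_1, …, n_r ≥ 1 integers. Identify the polynomial ring in the variables _sT_{ij} (s = 1, …, r, 0 ≤ i ≤ n_s, j ∈ {n_s+1, n_s+2}) with the ring of polynomial functions on the product ∏_{s=1}^{r} (K^{n_s+1} × K^{n_s+1}), where for each s the vector u_s ∈ K^{n_s+1} has coordinates _sT_{i,n_s+1} and v_s ∈ K^{n_s+1} has coordinates _sT_{i,n_s+2}. Let W be the set of tuples ((u_1, v_1), …, (u_r, v_r)) such that for every s the vectors u_s and v_s are nonzero and linearly dependent over K. Then the vanishing ideal I(W) equals the ideal generated by all 2×2 minors _sT_{i,n_s+1}·_sT_{j,n_s+2} − _sT_{i,n_s+2}·_sT_{j,n_s+1} for s = 1, …, r and 0 ≤ i < j ≤ n_s, and this ideal is prime. -/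

import Mathlib

open MvPolynomial

/-- The index set of the polynomial ring in the variables `_sT_{ij}`
(`s = 1,…,r`, `0 ≤ i ≤ n_s`, `j ∈ {n_s+1, n_s+2}`): the index `⟨s, (i, 0)⟩`
stands for `_sT_{i,n_s+1}` and `⟨s, (i, 1)⟩` for `_sT_{i,n_s+2}`. A point
`v : IdxW r n → K` of `∏_{s} (K^{n_s+1} × K^{n_s+1})` has `s`-th component
`(u_s, v_s)` where `u_s = (v ⟨s,(i,0)⟩)_i` and `v_s = (v ⟨s,(i,1)⟩)_i`. -/
abbrev IdxW (r : ℕ) (n : Fin r → ℕ) : Type := Σ s : Fin r, Fin (n s + 1) × Fin 2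

/-- The vector `u_s ∈ K^{n_s+1}` of a point of `∏_{s} (K^{n_s+1} × K^{n_s+1})`. -/
def uVec {K : Type*} {r : ℕ} {n : Fin r → ℕ} (v : IdxW r n → K) (s : Fin r) :
    Fin (n s + 1) → K :=
  fun i => v ⟨s, (i, 0)⟩

/-- The vector `v_s ∈ K^{n_s+1}` of a point of `∏_{s} (K^{n_s+1} × K^{n_s+1})`. -/
def vVec {K : Type*} {r : ℕ} {n : Fin r → ℕ} (v : IdxW r n → K) (s : Fin r) :
    Fin (n s + 1) → K :=
  fun i => v ⟨s, (i, 1)⟩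

/-- The set `W` of tuples `((u_1,v_1), …, (u_r,v_r))` such that for every `s`
the vectors `u_s` and `v_s` are nonzero and linearly dependent over `K`. -/
def W (K : Type*) [Field K] (r : ℕ) (n : Fin r → ℕ) : Set (IdxW r n → K) :=
  {v | ∀ s : Fin r, uVec v s ≠ 0 ∧ vVec v s ≠ 0 ∧
    ¬ LinearIndependent K ![uVec v s, vVec v s]}

/-- The ideal generated by all the `2×2` minors
`_sT_{i,n_s+1}·_sT_{j,n_s+2} − _sT_{i,n_s+2}·_sT_{j,n_s+1}` (`s = 1,…,r`,
`0 ≤ i < j ≤ n_s`) of the `2×(n_s+1)` matrices whose columns are the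
`(_sT_{i,n_s+1}, _sT_{i,n_s+2})ᵗ`. -/
noncomputable def minorsIdeal (K : Type*) [Field K] (r : ℕ) (n : Fin r → ℕ) :
    Ideal (MvPolynomial (IdxW r n) K) :=
  Ideal.span {x | ∃ s : Fin r, ∃ i j : Fin (n s + 1), i < j ∧
    x = X ⟨s, (i, 0)⟩ * X ⟨s, (j, 1)⟩ - X ⟨s, (i, 1)⟩ * X ⟨s, (j, 0)⟩}

/-!
Sending `_sT_{ij}` to a product `x_{s,i} y_{s,j}` of new variables maps monomials to monomials, and
two monomials have the same image exactly when they have the same multisets of row indices and of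
column indices. Such monomials are related by exchanges
`_sT_{ij} _sT_{i'j'} ↔ _sT_{ij'} _sT_{i'j}`, so they are congruent modulo the minors. Hence the
minors generate the kernel of this map into a polynomial ring, which is a prime ideal. Every
polynomial vanishing on `W` lies in that kernel, because the points `x_{s,i} y_{s,j}` with nonzero
`x` and `y` belong to `W` and are dense among all values of the parametrization.
-/

theorem ker_le_ker_of_basis_map_basis {R M N P α β : Type*} [CommSemiring R]
    [AddCommMonoid M] [AddCommMonoid N] [AddCommMonoid P] [Module R M] [Module R N] [Module R P]
    (b : Module.Basis α R M) (c : Module.Basis β R N) {φ : M →ₗ[R] N} {ψ : M →ₗ[R] P} {e : α → β}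
    (hφ : ∀ a, φ (b a) = c (e a)) (hψ : (ψ ∘ b).FactorsThrough e) :
    LinearMap.ker φ ≤ LinearMap.ker ψ := by
  have ψ_eq : ψ = c.constr R (Function.extend e (ψ ∘ b) 0) ∘ₗ φ :=
    b.ext fun a => by
      rw [LinearMap.comp_apply, hφ, Module.Basis.constr_basis, hψ.extend_apply, Function.comp_apply]
  rw [ψ_eq]
  exact LinearMap.ker_le_ker_comp _ _

theorem monomial_one_eq_prod_map_X {σ R : Type*} [CommSemiring R] (m : σ →₀ ℕ) :
    (monomial m 1 : MvPolynomial σ R) = (m.toMultiset.map X).prod := by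
  rw [monomial_eq, C_1, one_mul, Finsupp.toMultiset_map, Finsupp.prod_toMultiset,
    Finsupp.prod_mapDomain_index (fun _ => pow_zero _) (fun _ _ _ => pow_add _ _ _)]

section BlockMatrices

variable {ι : Type*} {I J : ι → Type*}

/-- The row of an entry of a family of matrices, the `s`-th one being indexed by `I s × J s`. Rows
of different matrices are distinct. -/
def rowIndex (t : Σ s, I s × J s) : Σ s, I s := ⟨t.1, t.2.1⟩

/-- The column of an entry of a family of matrices, the `s`-th one being indexed by `I s × J s`.
Columns of different matrices are distinct. -/
def colIndex (t : Σ s, I s × J s) : Σ s, J s := ⟨t.1, t.2.2⟩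

/-- All `2 × 2` minors of every matrix of the family `f` vanish. The condition is written without
subtraction, so that it makes sense for entries in a monoid. -/
def HasVanishingMinors {A : Type*} [Mul A] (f : (Σ s, I s × J s) → A) : Prop :=
  ∀ (s : ι) (i i' : I s) (j j' : J s),
    f ⟨s, i, j⟩ * f ⟨s, i', j'⟩ = f ⟨s, i, j'⟩ * f ⟨s, i', j⟩

/-- The family of matrices of rank at most one whose entries are the products of a row parameter
`w (inl (s, i))` and a column parameter `w (inr (s, j))`. -/
def segrePoint {A : Type*} [Mul A] (w : (Σ s, I s) ⊕ (Σ s, J s) → A) (t : Σ s, I s × J s) : A :=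
  w (.inl (rowIndex t)) * w (.inr (colIndex t))

theorem hasVanishingMinors_segrePoint {A : Type*} [CommSemigroup A]
    (w : (Σ s, I s) ⊕ (Σ s, J s) → A) : HasVanishingMinors (segrePoint w) := by
  intro s i i' j j'
  simp only [segrePoint, rowIndex, colIndex]
  ac_rfl

section Monomials

variable {A : Type*} [CommMonoid A] {f : (Σ s, I s × J s) → A}

theorem HasVanishingMinors.exists_cons_prod_map_eq (hf : HasVanishingMinors f)
    {a : Σ s, I s × J s} {M : Multiset (Σ s, I s × J s)}
    (hrow : rowIndex a ∈ M.map rowIndex) (hcol : colIndex a ∈ M.map colIndex) :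
    ∃ N : Multiset (Σ s, I s × J s),
      (a ::ₘ N).map rowIndex = M.map rowIndex ∧ (a ::ₘ N).map colIndex = M.map colIndex ∧
        ((a ::ₘ N).map f).prod = (M.map f).prod := by
  obtain ⟨⟨s, i, j'⟩, hb, hba⟩ := Multiset.mem_map.1 hrow
  obtain ⟨⟨s', i', j⟩, hc, hca⟩ := Multiset.mem_map.1 hcol
  obtain ⟨t, k, l⟩ := a
  obtain ⟨rfl, rfl⟩ : s = t ∧ HEq i k := by simpa [rowIndex] using hba
  obtain ⟨rfl, rfl⟩ : s' = s ∧ HEq j l := by simpa [colIndex] using hca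
  obtain ⟨L, rfl⟩ := Multiset.exists_cons_of_mem hb
  rcases Multiset.mem_cons.1 hc with same | hcL
  · obtain ⟨rfl, rfl⟩ : i' = i ∧ j = j' := by simpa using same
    exact ⟨L, rfl, rfl, rfl⟩
  · obtain ⟨N, rfl⟩ := Multiset.exists_cons_of_mem hcL
    refine ⟨⟨s', i', j'⟩ ::ₘ N, ?_, ?_, ?_⟩
    · simp only [Multiset.map_cons, rowIndex]
    · simp only [Multiset.map_cons, colIndex]
      rw [Multiset.cons_swap]
    · simp only [Multiset.map_cons, Multiset.prod_cons]
      rw [← mul_assoc, hf, mul_assoc]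

theorem HasVanishingMinors.prod_map_eq (hf : HasVanishingMinors f)
    {M M' : Multiset (Σ s, I s × J s)} (hrow : M.map rowIndex = M'.map rowIndex)
    (hcol : M.map colIndex = M'.map colIndex) : (M.map f).prod = (M'.map f).prod := by
  induction M using Multiset.induction_on generalizing M' with
  | empty =>
    have M'_eq : M' = 0 := Multiset.map_eq_zero.1 hrow.symm
    rw [M'_eq]
  | cons a M ih =>
    obtain ⟨N, hNrow, hNcol, hNprod⟩ := hf.exists_cons_prod_map_eq (a := a) (M := M')
      (hrow ▸ Multiset.mem_map_of_mem _ (Multiset.mem_cons_self a M))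
      (hcol ▸ Multiset.mem_map_of_mem _ (Multiset.mem_cons_self a M))
    have tail_eq : (M.map f).prod = (N.map f).prod := by
      apply ih
      · simpa only [Multiset.map_cons, Multiset.cons_inj_right] using hrow.trans hNrow.symm
      · simpa only [Multiset.map_cons, Multiset.cons_inj_right] using hcol.trans hNcol.symm
    rw [← hNprod, Multiset.map_cons, Multiset.map_cons, Multiset.prod_cons, Multiset.prod_cons,
      tail_eq]

end Monomials

section Kernel

variable (I J) (R : Type*) [CommRing R]

/-- The ideal generated by the `2 × 2` minors of a family of generic matrices, the `s`-th one being
indexed by `I s × J s`. -/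
noncomputable def blockMinorsIdeal : Ideal (MvPolynomial (Σ s, I s × J s) R) :=
  Ideal.span {x | ∃ (s : ι) (i i' : I s) (j j' : J s),
    x = X ⟨s, i, j⟩ * X ⟨s, i', j'⟩ - X ⟨s, i, j'⟩ * X ⟨s, i', j⟩}

/-- The comorphism of the product of the Segre maps: it substitutes products of row and column
variables for the entries of a family of generic matrices. -/
noncomputable def segre :
    MvPolynomial (Σ s, I s × J s) R →ₐ[R] MvPolynomial ((Σ s, I s) ⊕ (Σ s, J s)) R :=
  bind₁ (segrePoint X)

variable {I J R}

theorem blockMinorsIdeal_le_ker_iff {S : Type*} [CommRing S]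
    {φ : MvPolynomial (Σ s, I s × J s) R →+* S} :
    blockMinorsIdeal I J R ≤ RingHom.ker φ ↔ HasVanishingMinors fun t => φ (X t) := by
  simp only [blockMinorsIdeal, Ideal.span_le, Set.subset_def, Set.mem_ofPred_eq, SetLike.mem_coe,
    RingHom.mem_ker]
  constructor
  · intro h s i i' j j'
    simpa only [map_sub, map_mul, sub_eq_zero] using h _ ⟨s, i, i', j, j', rfl⟩
  · rintro h _ ⟨s, i, i', j, j', rfl⟩
    simpa only [map_sub, map_mul, sub_eq_zero] using h s i i' j j'

theorem blockMinorsIdeal_le_iff {𝔞 : Ideal (MvPolynomial (Σ s, I s × J s) R)} :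
    blockMinorsIdeal I J R ≤ 𝔞 ↔ HasVanishingMinors fun t => Ideal.Quotient.mk 𝔞 (X t) := by
  rw [← blockMinorsIdeal_le_ker_iff, Ideal.mk_ker]

theorem segre_monomial_one (m : (Σ s, I s × J s) →₀ ℕ) :
    segre I J R (monomial m 1) =
      monomial ((m.mapDomain rowIndex).sumElim (m.mapDomain colIndex)) 1 := by
  rw [segre, bind₁_monomial, monomial_eq, Finsupp.prod_sumElim,
    Finsupp.prod_mapDomain_index (by simp) (by simp [pow_add]),
    Finsupp.prod_mapDomain_index (by simp) (by simp [pow_add]), ← Finsupp.prod_mul]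
  simp only [segrePoint, mul_pow, Finsupp.prod, Function.comp_apply]

theorem mk_monomial_one_eq_of_mapDomain_eq {m m' : (Σ s, I s × J s) →₀ ℕ}
    (hrow : m.mapDomain rowIndex = m'.mapDomain rowIndex)
    (hcol : m.mapDomain colIndex = m'.mapDomain colIndex) :
    Ideal.Quotient.mk (blockMinorsIdeal I J R) (monomial m 1) =
      Ideal.Quotient.mk (blockMinorsIdeal I J R) (monomial m' 1) := by
  rw [monomial_one_eq_prod_map_X, monomial_one_eq_prod_map_X, map_multiset_prod,
    map_multiset_prod, Multiset.map_map, Multiset.map_map]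
  apply (blockMinorsIdeal_le_iff.1 le_rfl).prod_map_eq
  · rw [Finsupp.toMultiset_map, Finsupp.toMultiset_map, hrow]
  · rw [Finsupp.toMultiset_map, Finsupp.toMultiset_map, hcol]

theorem ker_segre_le_blockMinorsIdeal :
    RingHom.ker (segre I J R) ≤ blockMinorsIdeal I J R := by
  have ker_le : LinearMap.ker (segre I J R).toLinearMap ≤
      LinearMap.ker (Ideal.Quotient.mkₐ R (blockMinorsIdeal I J R)).toLinearMap := by
    refine ker_le_ker_of_basis_map_basis (basisMonomials _ R) (basisMonomials _ R)
      (e := fun m => (m.mapDomain rowIndex).sumElim (m.mapDomain colIndex)) ?_ ?_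
    · simpa only [coe_basisMonomials, AlgHom.toLinearMap_apply] using segre_monomial_one
    · intro m m' h
      obtain ⟨hrow, hcol⟩ := Prod.mk.inj (Finsupp.sumFinsuppEquivProdFinsupp.symm.injective
        (a₁ := (_, _)) (a₂ := (_, _)) h)
      simpa using mk_monomial_one_eq_of_mapDomain_eq hrow hcol
  exact fun p hp => Ideal.Quotient.eq_zero_iff_mem.1 (ker_le hp)

theorem ker_segre : RingHom.ker (segre I J R) = blockMinorsIdeal I J R := by
  refine le_antisymm ker_segre_le_blockMinorsIdeal ?_
  refine (blockMinorsIdeal_le_ker_iff (φ := (segre I J R).toRingHom)).2 ?_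
  simpa [segre] using hasVanishingMinors_segrePoint _

theorem blockMinorsIdeal_isPrime [IsDomain R] : (blockMinorsIdeal I J R).IsPrime :=
  ker_segre (I := I) (J := J) (R := R) ▸ RingHom.ker_isPrime _

theorem mem_blockMinorsIdeal_of_eval_segrePoint_eq_zero [IsDomain R] [Infinite R]
    {p : MvPolynomial (Σ s, I s × J s) R}
    (hp : ∀ w : (Σ s, I s) ⊕ (Σ s, J s) → R, (∀ k, w k ≠ 0) → eval (segrePoint w) p = 0) :
    p ∈ blockMinorsIdeal I J R := by
  rw [← ker_segre, RingHom.mem_ker]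
  refine funext_set (fun _ => {0}ᶜ) (fun _ => (Set.finite_singleton 0).infinite_compl) ?_
  intro w hw
  have eval_segre : eval w (segre I J R p) = eval (segrePoint w) p := by
    have eval_entry : (fun t => eval w (segrePoint X t)) = segrePoint w := by
      ext t
      simp only [segrePoint, map_mul, eval_X]
    rw [← eval_entry]
    exact eval₂Hom_bind₁ _ _ _ _
  rw [eval_segre, map_zero]
  exact hp w fun k => hw k (Set.mem_univ k)

end Kernel

end BlockMatrices

section TwoColumns

variable {K : Type*} [Field K] {r : ℕ} {n : Fin r → ℕ}

theorem minorsIdeal_eq_blockMinorsIdeal :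
    minorsIdeal K r n = blockMinorsIdeal (fun s => Fin (n s + 1)) (fun _ => Fin 2) K := by
  apply le_antisymm
  · refine Ideal.span_mono ?_
    rintro _ ⟨s, i, j, -, rfl⟩
    exact ⟨s, i, j, 0, 1, rfl⟩
  · have minor_mem (s : Fin r) (i j : Fin (n s + 1)) :
        X ⟨s, i, 0⟩ * X ⟨s, j, 1⟩ - X ⟨s, i, 1⟩ * X ⟨s, j, 0⟩ ∈ minorsIdeal K r n := by
      rcases lt_trichotomy i j with hij | rfl | hji
      · exact Ideal.subset_span ⟨s, i, j, hij, rfl⟩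
      · simp [mul_comm]
      · rw [← neg_mem_iff]
        exact Ideal.subset_span ⟨s, j, i, hji, by ring⟩
    have minor_eq (s : Fin r) (i j : Fin (n s + 1)) :=
      Ideal.Quotient.eq.2 (minor_mem s i j)
    simp only [map_mul] at minor_eq
    refine blockMinorsIdeal_le_iff.2 fun s i i' j j' => ?_
    fin_cases j <;> fin_cases j'
    · rfl
    · exact minor_eq s i i'
    · exact (minor_eq s i i').symm
    · rfl

theorem minorsIdeal_isPrime : (minorsIdeal K r n).IsPrime := by
  rw [minorsIdeal_eq_blockMinorsIdeal]
  exact blockMinorsIdeal_isPrime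

theorem minorsIdeal_le_vanishingIdeal_W : minorsIdeal K r n ≤ vanishingIdeal K (W K r n) := by
  refine Ideal.span_le.2 ?_
  rintro _ ⟨s, i, j, -, rfl⟩ v hv
  obtain ⟨u_ne_zero, -, dependent⟩ := hv s
  obtain ⟨a, ha⟩ : ∃ a : K, a • uVec v s = vVec v s := by
    simpa only [LinearIndependent.pair_iff' u_ne_zero, not_forall, not_not] using dependent
  have v_eq (k : Fin (n s + 1)) : v ⟨s, k, 1⟩ = a * v ⟨s, k, 0⟩ := (congrFun ha k).symm
  simp only [map_sub, map_mul, aeval_X, v_eq]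
  ring

theorem segrePoint_mem_W {w : (Σ s, Fin (n s + 1)) ⊕ (Σ _ : Fin r, Fin 2) → K}
    (hw : ∀ k, w k ≠ 0) : segrePoint w ∈ W K r n := by
  have entry_ne_zero (t : IdxW r n) : segrePoint w t ≠ 0 := mul_ne_zero (hw _) (hw _)
  intro s
  refine ⟨fun h => entry_ne_zero _ (congrFun h 0), fun h => entry_ne_zero _ (congrFun h 0), ?_⟩
  intro independent
  have relation : w (.inr ⟨s, 1⟩) • uVec (segrePoint w) s +
      (-w (.inr ⟨s, 0⟩)) • vVec (segrePoint w) s = 0 := by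
    ext i
    simp only [uVec, vVec, segrePoint, rowIndex, colIndex, Pi.add_apply, Pi.smul_apply,
      smul_eq_mul, Pi.zero_apply]
    ring
  exact hw _ (LinearIndependent.pair_iff.1 independent _ _ relation).1

theorem vanishingIdeal_W [Infinite K] : vanishingIdeal K (W K r n) = minorsIdeal K r n := by
  refine le_antisymm (fun p hp => ?_) minorsIdeal_le_vanishingIdeal_W
  rw [minorsIdeal_eq_blockMinorsIdeal]
  exact mem_blockMinorsIdeal_of_eval_segrePoint_eq_zero fun w hw => hp _ (segrePoint_mem_W hw)

end TwoColumns

theorem stmt13_general (K : Type*) [Field K] [Infinite K] (r : ℕ) (n : Fin r → ℕ) :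
    {p : MvPolynomial (IdxW r n) K | ∀ v ∈ W K r n, eval v p = 0}
      = ↑(minorsIdeal K r n) ∧ (minorsIdeal K r n).IsPrime :=
  ⟨congrArg SetLike.coe vanishingIdeal_W, minorsIdeal_isPrime⟩

/-- The vanishing ideal of `W` equals the ideal generated by all the `2×2`
minors, and this ideal is prime. -/
theorem stmt13 (K : Type*) [Field K] [IsAlgClosed K]
    (r : ℕ) (hr : 1 ≤ r) (n : Fin r → ℕ) (hn : ∀ s, 1 ≤ n s) :
    {p : MvPolynomial (IdxW r n) K | ∀ v ∈ W K r n, eval v p = 0}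
      = ↑(minorsIdeal K r n) ∧ (minorsIdeal K r n).IsPrime :=
  stmt13_general K r n
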